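/- Let d ∈ ℤ[X] be a monic polynomial of degree 4 that is not squarefree. Then d is Pellian over ℤ[X] if and only if there exist ε ∈ {1, −1} and c ∈ ℤ such that the polynomial d(εX + c) is one of X²(X²+1), X²(X²−1), X²(X²+2), X²(X²−2), X²(X²−2X−1). -/

import Mathlib

open Polynomial

lemma pq_form (q : ℤ[X]) (hm : q.Monic) (h2 : q.natDegree = 2) :
    q = X ^ 2 + C (q.coeff 1) * X + C (q.coeff 0) := by
  have h := q.as_sum_range_C_mul_X_pow
  rw [h2] at h
  have h3 : q.coeff 2 = 1 := by rw [← h2]; exact hm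
  simp only [Finset.sum_range_succ, Finset.sum_range_zero, h3] at h
  conv_lhs => rw [h]
  simp only [C_1]
  ring

lemma pq_monic (a b : ℤ) : (X ^ 2 + C a * X + C b : ℤ[X]).Monic := by
  monicity!

lemma pq_deg (a b : ℤ) : (X ^ 2 + C a * X + C b : ℤ[X]).natDegree = 2 := by
  compute_degree!

lemma pell_deg (D A B : ℤ[X]) (c : ℤ) (hD : D.Monic) (hD2 : D.natDegree = 2)
    (hB : B ≠ 0) (h : A ^ 2 - D * B ^ 2 = C c) :
    A.natDegree = B.natDegree + 1 ∧ A.leadingCoeff ^ 2 = B.leadingCoeff ^ 2 := by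
  have hB2 : B ^ 2 ≠ 0 := pow_ne_zero 2 hB
  have h1 : A ^ 2 = D * B ^ 2 + C c := by rw [← h]; ring
  have h2 : (D * B ^ 2).natDegree = 2 + 2 * B.natDegree := by
    rw [hD.natDegree_mul' hB2, hD2, natDegree_pow]
  have h3 : (A ^ 2).natDegree = 2 + 2 * B.natDegree := by
    rw [h1, natDegree_add_C, h2]
  have h4 : (A ^ 2).leadingCoeff = (D * B ^ 2).leadingCoeff := by
    rw [leadingCoeff, leadingCoeff, h3, h2, h1, coeff_add, coeff_C]
    simp
  rw [natDegree_pow] at h3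
  rw [leadingCoeff_mul, leadingCoeff_pow, leadingCoeff_pow, hD.leadingCoeff, one_mul] at h4
  exact ⟨by omega, h4⟩

lemma coeff_mul_lin (B : ℤ[X]) (a : ℤ) (m : ℕ) (hB : B.natDegree ≤ m) :
    (B * (C 2 * X + C a)).coeff (m + 1) = 2 * B.coeff m := by
  have : B * (C 2 * X + C a) = C 2 * (B * X) + C a * B := by ring
  rw [this, coeff_add, coeff_C_mul, coeff_C_mul, coeff_mul_X,
    coeff_eq_zero_of_natDegree_lt (by omega : B.natDegree < m + 1)]
  ring

lemma descent (a b : ℤ) (m : ℕ) : ∀ (A B : ℤ[X]) (c : ℤ), c ≠ 0 → B ≠ 0 → B.natDegree = m →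
    A ^ 2 - (X ^ 2 + C a * X + C b) * B ^ 2 = C c → A.leadingCoeff = B.leadingCoeff →
    B.leadingCoeff ^ 2 * (a ^ 2 - 4 * b) ^ (m + 1) = c * 4 ^ (2 * m + 1) ∧
    (0 < a → 0 ≤ b → 0 < A.eval 0 * B.eval 0) := by
  induction m with
  | zero =>
    intro A B c hc hB hm h hl
    obtain ⟨hA, -⟩ := pell_deg _ A B c (pq_monic a b) (pq_deg a b) hB h
    rw [hm] at hA
    obtain ⟨β, rfl⟩ : ∃ β, B = C β := ⟨_, eq_C_of_natDegree_eq_zero hm⟩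
    have hA' : A = C β * X + C (A.coeff 0) := by
      have := A.as_sum_range_C_mul_X_pow
      rw [hA] at this
      have h3 : A.coeff 1 = β := by
        rw [leadingCoeff_C, leadingCoeff, hA] at hl; simpa using hl
      simp only [Finset.sum_range_succ, Finset.sum_range_zero, h3] at this
      conv_lhs => rw [this]
      simp; ring
    generalize A.coeff 0 = γ at hA'
    subst hA'
    have hβ : β ≠ 0 := by rintro rfl; simp at hB
    have e0 := congrArg (eval 0) h
    have e1 := congrArg (eval 1) h
    simp at e0 e1
    have e2 := congrArg (eval (-1)) h
    simp at e2
    have h5 : β * (2 * γ - a * β) = 0 := by linarith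
    have h6 : 2 * γ = a * β := by
      have := (mul_eq_zero.mp h5).resolve_left hβ
      linarith
    refine ⟨?_, ?_⟩
    · rw [leadingCoeff_C]
      have : 4 * c = (2 * γ) ^ 2 - 4 * b * β ^ 2 := by rw [← e0]; ring
      rw [h6] at this; norm_num; linarith
    · intro ha hb
      simp
      have : 0 < a * β ^ 2 := by positivity
      nlinarith
  | succ m ih =>
    intro A B c hc hB hm h hl
    obtain ⟨hA, -⟩ := pell_deg _ A B c (pq_monic a b) (pq_deg a b) hB h
    rw [hm] at hA
    set Δ : ℤ := a ^ 2 - 4 * b with hΔ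
    set D : ℤ[X] := X ^ 2 + C a * X + C b with hD
    set L : ℤ[X] := C 2 * X + C a with hL
    have hLD : L ^ 2 = C Δ + 4 * D := by
      rw [hL, hΔ, hD]; simp only [C_sub, C_mul, C_pow]
      have : (C 2 : ℤ[X]) = 2 := rfl
      have : (C 4 : ℤ[X]) = 4 := rfl
      simp only [*]; ring
    have hC4 : (C 4 : ℤ[X]) = 4 := rfl
    have hC2 : (C 2 : ℤ[X]) = 2 := rfl
    obtain ⟨A', hA'⟩ : ∃ A', A' = A * L - 2 * B * D := ⟨_, rfl⟩
    obtain ⟨B', hB'⟩ : ∃ B', B' = B * L - 2 * A := ⟨_, rfl⟩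
    obtain ⟨S, hS⟩ : ∃ S, S = B * L + C 2 * A := ⟨_, rfl⟩
    set β := B.leadingCoeff with hβ
    have hβ0 : β ≠ 0 := leadingCoeff_ne_zero.mpr hB
    have hBc : B.coeff (m + 1) = β := by rw [hβ, leadingCoeff, hm]
    have hAc : A.coeff (m + 1 + 1) = β := by rw [← hl, leadingCoeff, hA]
    have hSc : S.coeff (m + 1 + 1) = 4 * β := by
      rw [hS, coeff_add, coeff_mul_lin B a _ hm.le, coeff_C_mul, hBc, hAc]; ring
    have hSle : S.natDegree ≤ m + 1 + 1 := by
      rw [hS]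
      refine natDegree_add_le_of_degree_le ?_ ?_
      · refine natDegree_mul_le_of_le hm.le ?_
        rw [hL]; compute_degree
      · exact (natDegree_C_mul_le _ _).trans hA.le
    have hSdeg : S.natDegree = m + 1 + 1 :=
      natDegree_eq_of_le_of_coeff_ne_zero hSle (by rw [hSc]; omega)
    have hprod : B' * S = C Δ * B ^ 2 - C (4 * c) := by
      rw [hB', hS, C_mul, ← h, hC4, hC2]
      linear_combination B ^ 2 * hLD
    have hS0 : S ≠ 0 := by rintro rfl; simp at hSdeg
    have hnorm : A' ^ 2 - D * B' ^ 2 = C (c * Δ) := by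
      rw [hA', hB', C_mul, ← h]
      linear_combination (A ^ 2 - D * B ^ 2) * hLD
    have r1 : C Δ * A = A' * L + 2 * B' * D := by
      rw [hA', hB']; linear_combination (-A) * hLD
    have r2 : C Δ * B = 2 * A' + B' * L := by
      rw [hA', hB']; linear_combination (-B) * hLD
    have hΔ0 : Δ ≠ 0 := by
      intro h0
      rw [h0] at hprod
      have h1 : B' * S = C (-(4 * c)) := by rw [hprod]; simp
      have hB0 : B' ≠ 0 := by
        rintro rfl
        rw [zero_mul, eq_comm, C_eq_zero] at h1; omega
      have := congrArg natDegree h1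
      rw [natDegree_mul hB0 hS0, natDegree_C] at this
      omega
    have hcΔ : C Δ ≠ (0 : ℤ[X]) := by simpa using hΔ0
    have hdeg : (C Δ * B ^ 2).natDegree = 2 * (m + 1) := by
      rw [natDegree_C_mul hΔ0, natDegree_pow, hm]
    have hdeg' : (B' * S).natDegree = 2 * (m + 1) := by
      rw [hprod, natDegree_sub_C, hdeg]
    have hB'0 : B' ≠ 0 := by
      rintro rfl; simp at hdeg'
    have hB'deg : B'.natDegree = m := by
      rw [natDegree_mul hB'0 hS0] at hdeg'; omega
    have hlc : B'.leadingCoeff * (4 * β) = Δ * β ^ 2 := by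
      have h1 : (B' * S).leadingCoeff = (C Δ * B ^ 2).leadingCoeff := by
        rw [leadingCoeff, leadingCoeff, hdeg', hdeg, hprod, coeff_sub, coeff_C]
        simp
      rw [leadingCoeff_mul, leadingCoeff_mul, leadingCoeff_pow, leadingCoeff_C] at h1
      rw [← h1, ← hSc, ← hSdeg]; rfl
    have hlc2 : 4 * B'.leadingCoeff = Δ * β := by
      apply mul_right_cancel₀ hβ0; linarith
    obtain ⟨hA'deg, hA'lc⟩ := pell_deg D A' B' _ (pq_monic a b) (pq_deg a b) hB'0 hnorm
    have hA'B' : A'.leadingCoeff = B'.leadingCoeff := by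
      have h1 := congrArg (fun p => coeff p (m + 1)) r2
      have h2 : (2 * A' : ℤ[X]) = C 2 * A' := rfl
      simp only [h2, coeff_add, coeff_C_mul] at h1
      rw [coeff_mul_lin B' a m hB'deg.le, hBc] at h1
      have h3 : A'.coeff (m + 1) = A'.leadingCoeff := by
        rw [leadingCoeff, hA'deg, hB'deg]
      have h4 : B'.coeff m = B'.leadingCoeff := by rw [leadingCoeff, hB'deg]
      rw [h3, h4] at h1
      linarith
    obtain ⟨i1, i2⟩ := ih A' B' (c * Δ) (mul_ne_zero hc hΔ0) hB'0 hB'deg hnorm hA'B'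
    refine ⟨?_, ?_⟩
    · apply mul_right_cancel₀ hΔ0
      have : (4 * B'.leadingCoeff) ^ 2 * Δ ^ (m + 1) = 16 * (c * Δ * 4 ^ (2 * m + 1)) := by
        rw [← i1]; ring
      rw [hlc2] at this
      calc β ^ 2 * Δ ^ (m + 1 + 1) * Δ = (Δ * β) ^ 2 * Δ ^ (m + 1) := by ring
        _ = _ := by rw [this]; ring
    · intro ha hb
      have hpos := i2 ha hb
      have s1 := congrArg (eval 0) r1
      have s2 := congrArg (eval 0) r2
      simp [hL, hD] at s1 s2
      have : Δ ^ 2 * (A.eval 0 * B.eval 0) = 2 * (A'.eval 0) ^ 2 * a + 2 * (B'.eval 0) ^ 2 * b * a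
          + (A'.eval 0 * B'.eval 0) * (a ^ 2 + 4 * b) := by
        calc _ = (Δ * A.eval 0) * (Δ * B.eval 0) := by ring
          _ = _ := by rw [s1, s2]; ring
      have h9 : 0 < Δ ^ 2 * (A.eval 0 * B.eval 0) := by rw [this]; positivity
      exact pos_of_mul_pos_right h9 (sq_nonneg _)

lemma core (a b : ℤ) (f g : ℤ[X]) (hg : g ≠ 0)
    (h : f ^ 2 - (X ^ 2 * (X ^ 2 + C a * X + C b)) * g ^ 2 = 1) :
    ((a ^ 2 - 4 * b).natAbs = 1 ∨ (a ^ 2 - 4 * b).natAbs = 2 ∨ (a ^ 2 - 4 * b).natAbs = 4 ∨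
      (a ^ 2 - 4 * b).natAbs = 8) ∧ ¬ (0 < a ∧ 0 ≤ b) := by
  have hG : X * g ≠ 0 := mul_ne_zero X_ne_zero hg
  have h1 : f ^ 2 - (X ^ 2 + C a * X + C b) * (X * g) ^ 2 = C 1 := by
    rw [C_1, ← h]; ring
  obtain ⟨-, hl⟩ := pell_deg _ f _ 1 (pq_monic a b) (pq_deg a b) hG h1
  have key : (X * g).leadingCoeff ^ 2 * (a ^ 2 - 4 * b) ^ ((X * g).natDegree + 1)
      = 1 * 4 ^ (2 * (X * g).natDegree + 1) ∧ ¬ (0 < a ∧ 0 ≤ b) := by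
    rcases sq_eq_sq_iff_eq_or_eq_neg.mp hl with hl | hl
    · obtain ⟨k1, k2⟩ := descent a b _ f (X * g) 1 one_ne_zero hG rfl h1 hl
      refine ⟨k1, fun hab => ?_⟩
      have := k2 hab.1 hab.2
      simp at this
    · obtain ⟨k1, k2⟩ := descent a b _ (-f) (X * g) 1 one_ne_zero hG rfl
        (by rw [neg_sq]; exact h1) (by rw [leadingCoeff_neg, hl, neg_neg])
      refine ⟨k1, fun hab => ?_⟩
      have := k2 hab.1 hab.2
      simp at this
  refine ⟨?_, key.2⟩
  have k := key.1
  generalize (X * g).natDegree = m at k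
  generalize (X * g).leadingCoeff = β at k
  generalize a ^ 2 - 4 * b = Δ at k ⊢
  have k2 := congrArg Int.natAbs k
  simp only [Int.natAbs_mul, Int.natAbs_pow, one_mul] at k2
  have e4 : (Int.natAbs 4) = 2 ^ 2 := rfl
  rw [e4, ← pow_mul] at k2
  have d1 : Δ.natAbs ^ (m + 1) ∣ 2 ^ (2 * (2 * m + 1)) := Dvd.intro_left _ k2
  have d2 : Δ.natAbs ∣ 2 ^ (2 * (2 * m + 1)) := (dvd_pow_self _ (by omega)).trans d1
  obtain ⟨j, -, hj⟩ := (Nat.dvd_prime_pow Nat.prime_two).mp d2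
  rw [hj, ← pow_mul] at d1
  have d3 := (Nat.pow_dvd_pow_iff_le_right (by norm_num)).mp d1
  have : j < 4 := by nlinarith
  rw [hj]
  interval_cases j <;> simp

lemma final (a b : ℤ)
    (h : (a ^ 2 - 4 * b).natAbs = 1 ∨ (a ^ 2 - 4 * b).natAbs = 2 ∨ (a ^ 2 - 4 * b).natAbs = 4 ∨
      (a ^ 2 - 4 * b).natAbs = 8) (h1 : ¬ (0 < a ∧ 0 ≤ b)) (h2 : ¬ (0 < -a ∧ 0 ≤ b)) :
    (a = 0 ∧ (b = 1 ∨ b = -1 ∨ b = 2 ∨ b = -2)) ∨ (a = 2 ∧ b = -1) ∨ (a = -2 ∧ b = -1) := by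
  by_cases ha : a = 0
  · subst ha
    simp at h
    omega
  · have hb : b < 0 := by by_contra; omega
    have ha2 : 0 < a ^ 2 := by positivity
    have : a ^ 2 ≤ 4 := by omega
    have h3 : a ≤ 2 := by nlinarith
    have h4 : -2 ≤ a := by nlinarith
    interval_cases a <;> omega

lemma expl (e : ℤ[X]) (he : e = X ^ 2 * (X ^ 2 + 1) ∨ e = X ^ 2 * (X ^ 2 - 1) ∨
    e = X ^ 2 * (X ^ 2 + 2) ∨ e = X ^ 2 * (X ^ 2 - 2) ∨ e = X ^ 2 * (X ^ 2 - 2 * X - 1)) :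
    ∃ f g : ℤ[X], g ≠ 0 ∧ f ^ 2 - e * g ^ 2 = 1 := by
  rcases he with rfl | rfl | rfl | rfl | rfl
  · exact ⟨2 * X ^ 2 + 1, 2, two_ne_zero, by ring⟩
  · exact ⟨2 * X ^ 2 - 1, 2, two_ne_zero, by ring⟩
  · exact ⟨X ^ 2 + 1, 1, one_ne_zero, by ring⟩
  · exact ⟨X ^ 2 - 1, 1, one_ne_zero, by ring⟩
  · refine ⟨2 * (X ^ 2 - 2 * X) ^ 2 - 1, 2 * (X - 2) * (X - 1), ?_, by ring⟩
    intro h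
    have := congrArg (eval 0) h
    simp at this

lemma pell_comp (d p : ℤ[X]) (q : ℤ[X]) (hpq : p.comp q = X)
    (h : ∃ f g : ℤ[X], g ≠ 0 ∧ f ^ 2 - d * g ^ 2 = 1) :
    ∃ f g : ℤ[X], g ≠ 0 ∧ f ^ 2 - (d.comp p) * g ^ 2 = 1 := by
  obtain ⟨f, g, hg, h⟩ := h
  refine ⟨f.comp p, g.comp p, ?_, ?_⟩
  · intro h0
    apply hg
    have := congrArg (fun r => r.comp q) h0
    simpa [comp_assoc, hpq] using this
  · have := congrArg (fun r => r.comp p) h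
    simpa using this

theorem nonsquarefree_quartic_pellian (d : Polynomial ℤ)
    (hmonic : d.Monic) (hdeg : d.natDegree = 4) (hnsf : ¬ Squarefree d) :
    (∃ f g : Polynomial ℤ, g ≠ 0 ∧ f ^ 2 - d * g ^ 2 = 1) ↔
    ∃ ε c : ℤ, (ε = 1 ∨ ε = -1) ∧
      (d.comp (C ε * X + C c) = X ^ 2 * (X ^ 2 + 1) ∨
       d.comp (C ε * X + C c) = X ^ 2 * (X ^ 2 - 1) ∨
       d.comp (C ε * X + C c) = X ^ 2 * (X ^ 2 + 2) ∨
       d.comp (C ε * X + C c) = X ^ 2 * (X ^ 2 - 2) ∨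
       d.comp (C ε * X + C c) = X ^ 2 * (X ^ 2 - 2 * X - 1)) := by
  constructor
  · intro hP
    unfold Squarefree at hnsf
    push Not at hnsf
    obtain ⟨p, ⟨q, hq⟩, hpu⟩ := hnsf
    have hd0 : d ≠ 0 := hmonic.ne_zero
    have hp0 : p ≠ 0 := by rintro rfl; simp at hq; exact hd0 hq
    have hq0 : q ≠ 0 := by rintro rfl; simp at hq; exact hd0 hq
    have hlc : p.leadingCoeff * p.leadingCoeff * q.leadingCoeff = 1 := by
      rw [← leadingCoeff_mul, ← leadingCoeff_mul, ← hq]; exact hmonic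
    have hdg : p.natDegree + p.natDegree + q.natDegree = 4 := by
      rw [← natDegree_mul hp0 hp0, ← natDegree_mul (mul_ne_zero hp0 hp0) hq0, ← hq, hdeg]
    have hplc : p.leadingCoeff = 1 ∨ p.leadingCoeff = -1 := by
      apply Int.isUnit_iff.mp
      exact IsUnit.of_mul_eq_one (p.leadingCoeff * q.leadingCoeff) (by rw [← hlc]; ring)
    have hqlc : q.Monic := by
      unfold Monic
      rcases hplc with h | h <;> rw [h] at hlc <;> linarith
    have hcases : p.natDegree = 0 ∨ p.natDegree = 1 ∨ p.natDegree = 2 := by omega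
    rcases hcases with h0 | h0 | h0
    · exfalso
      apply hpu
      rw [eq_C_of_natDegree_eq_zero h0] at hplc ⊢
      rw [leadingCoeff_C] at hplc
      exact isUnit_C.mpr (Int.isUnit_iff.mpr hplc)
    · obtain ⟨r, hr⟩ : ∃ r : ℤ, p * p = (X - C r) ^ 2 := by
        have h1 := p.as_sum_range_C_mul_X_pow
        rw [h0] at h1
        have h3 : p.coeff 1 = p.leadingCoeff := by rw [leadingCoeff, h0]
        simp only [Finset.sum_range_succ, Finset.sum_range_zero, h3] at h1
        rcases hplc with h | h <;> rw [h] at h1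
        · refine ⟨- p.coeff 0, ?_⟩
          generalize p.coeff 0 = t at h1 ⊢
          rw [h1]; simp; ring
        · refine ⟨p.coeff 0, ?_⟩
          generalize p.coeff 0 = t at h1 ⊢
          rw [h1]; simp; ring
      have hqm : (q.comp (X + C r)).Monic := hqlc.comp_X_add_C r
      have hq2 : (q.comp (X + C r)).natDegree = 2 := by
        rw [natDegree_comp, natDegree_X_add_C]; omega
      have hform := pq_form _ hqm hq2
      generalize (q.comp (X + C r)).coeff 1 = a at hform
      generalize (q.comp (X + C r)).coeff 0 = b at hform
      have hdc : d.comp (X + C r) = X ^ 2 * (X ^ 2 + C a * X + C b) := by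
        rw [hq, hr, mul_comp, hform]; simp
      have hdc' : d.comp (C (-1) * X + C r) = X ^ 2 * (X ^ 2 + C (-a) * X + C b) := by
        have h1 : (C (-1) * X + C r : ℤ[X]) = (X + C r).comp (-X) := by simp
        rw [h1, ← comp_assoc, hdc]; simp
      have P1 := pell_comp d (X + C r) (X - C r) (by simp) hP
      have P2 := pell_comp d (C (-1) * X + C r) (C r - X) (by simp) hP
      rw [hdc] at P1
      rw [hdc'] at P2
      obtain ⟨f1, g1, hg1, hh1⟩ := P1
      obtain ⟨f2, g2, hg2, hh2⟩ := P2
      have c1 := core a b f1 g1 hg1 hh1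
      have c2 := core (-a) b f2 g2 hg2 hh2
      have hC2 : (C 2 : ℤ[X]) = 2 := rfl
      rcases final a b c1.1 c1.2 c2.2 with ⟨rfl, rfl | rfl | rfl | rfl⟩ | ⟨rfl, rfl⟩ | ⟨rfl, rfl⟩
      · refine ⟨1, r, Or.inl rfl, Or.inl ?_⟩
        rw [C_1, one_mul, hdc]; simp
      · refine ⟨1, r, Or.inl rfl, Or.inr (Or.inl ?_)⟩
        rw [C_1, one_mul, hdc]; simp; ring
      · refine ⟨1, r, Or.inl rfl, Or.inr (Or.inr (Or.inl ?_))⟩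
        rw [C_1, one_mul, hdc]; simp
      · refine ⟨1, r, Or.inl rfl, Or.inr (Or.inr (Or.inr (Or.inl ?_)))⟩
        rw [C_1, one_mul, hdc]; simp; ring
      · refine ⟨-1, r, Or.inr rfl, Or.inr (Or.inr (Or.inr (Or.inr ?_)))⟩
        rw [hdc']; simp; ring
      · refine ⟨1, r, Or.inl rfl, Or.inr (Or.inr (Or.inr (Or.inr ?_)))⟩
        rw [C_1, one_mul, hdc]; simp; ring
    · exfalso
      have hq1 : q = 1 := hqlc.natDegree_eq_zero.mp (by omega)
      obtain ⟨f, g, hg, h⟩ := hP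
      rw [hq, hq1] at h
      have h1 : (f - p * g) * (f + p * g) = 1 := by rw [← h]; ring
      have hu : IsUnit (f - p * g) := IsUnit.of_mul_eq_one _ h1
      have hv : IsUnit (f + p * g) := IsUnit.of_mul_eq_one _ (by rw [mul_comm]; exact h1)
      have du := natDegree_eq_zero_of_isUnit hu
      have dv := natDegree_eq_zero_of_isUnit hv
      have h2 : C 2 * (p * g) = (f + p * g) - (f - p * g) := by
        have hC2 : (C 2 : ℤ[X]) = 2 := rfl
        rw [hC2]; ring
      have h3 := natDegree_sub_le (f + p * g) (f - p * g)
      rw [← h2, natDegree_C_mul two_ne_zero, natDegree_mul hp0 hg, du, dv] at h3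
      simp at h3
      omega
  · rintro ⟨ε, c, hε, h⟩
    have hP := expl _ h
    have hεε : ε * ε = 1 := by rcases hε with rfl | rfl <;> rfl
    have hCC : (C ε * C ε : ℤ[X]) = 1 := by rw [← C_mul, hεε, C_1]
    have h1 : (C ε * X + C c).comp (C ε * (X - C c)) = X := by
      simp only [add_comp, mul_comp, C_comp, X_comp]
      linear_combination (X - C c) * hCC
    have h2 : (C ε * (X - C c)).comp (C ε * X + C c) = X := by
      simp only [add_comp, sub_comp, mul_comp, C_comp, X_comp]
      linear_combination X * hCC
    have := pell_comp _ (C ε * (X - C c)) _ h2 hP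
    rwa [comp_assoc, h1, comp_X] at this
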